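/- The Kullback–Leibler divergence is jointly lower semicontinuous with respect to weak convergence: if P_n converges weakly to P and Q_n converges weakly to Q on a Polish space X, then liminf_{n→∞} D_KL(P_n ‖ Q_n) ≥ D_KL(P ‖ Q). -/

import Mathlib

open MeasureTheory Filter Topology Classical
open scoped ENNReal

/-- Kullback–Leibler divergence, `⊤` when absolute continuity or integrability fails. -/
noncomputable def klDiv {X : Type*} [MeasurableSpace X] (P Q : Measure X) : EReal :=
  if P ≪ Q ∧ Integrable (llr P Q) P then ((∫ x, llr P Q x ∂P : ℝ) : EReal) else ⊤

/-!
On finite measures, Mathlib's `ℝ≥0∞`-valued divergence `InformationTheory.klDiv P Q` is the supremum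
of `∫ g ∂P - ∫ (exp g - 1) ∂Q` over bounded continuous `g`, because `y ↦ exp y - 1` is the convex
conjugate of `klFun`. Each of these functionals is weakly continuous in `(P, Q)`, and a supremum of
continuous functions is lower semicontinuous. The optimal `g` is the log-density of `P` with respect
to `Q`; it is reached by truncating it and approximating the truncations by continuous functions.
-/

open InformationTheory (klFun klFun_apply klFun_zero klFun_nonneg)
open scoped BoundedContinuousFunction

section LogClamp

/-- The logarithm of `r` truncated to the interval `[exp (-n), exp n]`. Truncating before taking the
logarithm gives `0` the value `-n`, where truncating `Real.log 0 = 0` would give `0`. -/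
noncomputable def logClamp (n : ℕ) (r : ℝ) : ℝ :=
  Real.log (max (Real.exp (-n)) (min (Real.exp n) r))

lemma exp_logClamp (n : ℕ) (r : ℝ) :
    Real.exp (logClamp n r) = max (Real.exp (-n)) (min (Real.exp n) r) :=
  Real.exp_log (lt_max_of_lt_left (Real.exp_pos _))

lemma measurable_logClamp (n : ℕ) : Measurable (logClamp n) := by
  unfold logClamp
  fun_prop

lemma abs_logClamp_le (n : ℕ) (r : ℝ) : |logClamp n r| ≤ n := by
  refine abs_le.2 ⟨?_, ?_⟩ <;> rw [← Real.exp_le_exp, exp_logClamp]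
  · exact le_max_left _ _
  · exact max_le (Real.exp_le_exp.2 (neg_le_self n.cast_nonneg)) (min_le_left _ _)

lemma sub_exp_logClamp_mul_nonneg (n : ℕ) (r : ℝ) :
    0 ≤ (r - Real.exp (logClamp n r)) * logClamp n r := by
  have exp_neg_le_one : Real.exp (-(n : ℝ)) ≤ 1 :=
    Real.exp_le_one_iff.2 (neg_nonpos.2 n.cast_nonneg)
  have one_le_exp : 1 ≤ Real.exp (n : ℝ) := Real.one_le_exp n.cast_nonneg
  rcases le_total 1 r with hr | hr
  · refine mul_nonneg (sub_nonneg.2 ?_) (Real.one_le_exp_iff.1 ?_) <;> rw [exp_logClamp]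
    · exact max_le (exp_neg_le_one.trans hr) (min_le_right _ _)
    · exact le_max_of_le_right (le_min one_le_exp hr)
  · refine mul_nonneg_of_nonpos_of_nonpos (sub_nonpos.2 ?_) (Real.exp_le_one_iff.1 ?_) <;>
      rw [exp_logClamp, min_eq_right (hr.trans one_le_exp)]
    · exact le_max_right _ _
    · exact max_le exp_neg_le_one hr

lemma mul_logClamp_sub_exp_nonneg (n : ℕ) (r : ℝ) :
    0 ≤ r * logClamp n r - (Real.exp (logClamp n r) - 1) := by
  have h_klFun := klFun_nonneg (Real.exp_pos (logClamp n r)).le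
  rw [klFun_apply, Real.log_exp] at h_klFun
  linarith [sub_exp_logClamp_mul_nonneg n r]

lemma tendsto_mul_logClamp_sub_exp {r : ℝ} (hr : 0 ≤ r) :
    Tendsto (fun n ↦ r * logClamp n r - (Real.exp (logClamp n r) - 1)) atTop (𝓝 (klFun r)) := by
  have h_lower : Tendsto (fun n : ℕ ↦ Real.exp (-(n : ℝ))) atTop (𝓝 0) :=
    Real.tendsto_exp_neg_atTop_nhds_zero.comp tendsto_natCast_atTop_atTop
  have h_upper : Tendsto (fun n : ℕ ↦ Real.exp (n : ℝ)) atTop atTop :=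
    Real.tendsto_exp_atTop.comp tendsto_natCast_atTop_atTop
  rcases hr.eq_or_lt with rfl | hr
  · simp only [zero_mul, zero_sub, neg_sub, exp_logClamp, min_eq_right (Real.exp_pos _).le,
      max_eq_left (Real.exp_pos _).le, klFun_zero]
    simpa using h_lower.const_sub 1
  · refine tendsto_const_nhds.congr' ?_
    filter_upwards [h_lower.eventually_lt_const hr, h_upper.eventually_ge_atTop r] with n hn_lower
      hn_upper
    rw [exp_logClamp, logClamp, min_eq_right hn_upper, max_eq_right hn_lower.le, klFun_apply]
    ring

end LogClamp

lemma mul_sub_exp_le_klFun {r : ℝ} (hr : 0 ≤ r) (y : ℝ) :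
    r * y - (Real.exp y - 1) ≤ klFun r := by
  rw [klFun_apply]
  rcases hr.eq_or_lt with rfl | hr
  · linarith [Real.exp_pos y]
  · have h_tangent := Real.add_one_le_exp (y - Real.log r)
    rw [Real.exp_sub, Real.exp_log hr, le_div_iff₀ hr] at h_tangent
    linarith

lemma abs_exp_sub_one_le {y C : ℝ} (h : |y| ≤ C) : |Real.exp y - 1| ≤ Real.exp C + 1 := by
  refine (abs_sub _ _).trans ?_
  rw [Real.abs_exp, abs_one]
  gcongr
  exact le_of_abs_le h

lemma integrable_exp_sub_one_of_bounded {X : Type*} [MeasurableSpace X] {Q : Measure X}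
    [IsFiniteMeasure Q] {g : X → ℝ} {C : ℝ} (hg : Measurable g) (hC : ∀ x, |g x| ≤ C) :
    Integrable (fun x ↦ Real.exp (g x) - 1) Q :=
  .of_bound (by fun_prop) (Real.exp C + 1) (ae_of_all _ fun x ↦ abs_exp_sub_one_le (hC x))

/-- The functional of `g` in the variational formula `klDiv P Q = ⨆ g, klDual P Q g` for finite
measures and the divergence `InformationTheory.klDiv`. The `-1` makes it vanish at `g = 0`, in
accordance with the normalization `klFun 1 = 0`; for probability measures, optimizing over `g + c`
with `c` constant turns it into the functional `∫ g ∂P - log ∫ exp g ∂Q` of Donsker and Varadhan. -/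
noncomputable def klDual {X : Type*} [MeasurableSpace X] (P Q : Measure X) (g : X → ℝ) : ℝ :=
  ∫ x, g x ∂P - ∫ x, (Real.exp (g x) - 1) ∂Q

section Measurable

variable {X : Type*} [MeasurableSpace X] {P Q : Measure X}

lemma klDual_indicator_const_of_measure_eq_zero {A : Set X} (hA : MeasurableSet A) (hQA : Q A = 0)
    (c : ℝ) : klDual P Q (A.indicator fun _ ↦ c) = P.real A * c := by
  have h_exp : ∫ x, (Real.exp (A.indicator (fun _ ↦ c) x) - 1) ∂Q = 0 := by
    refine integral_eq_zero_of_ae ?_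
    filter_upwards [measure_eq_zero_iff_ae_notMem.1 hQA] with x hx
    simp [hx]
  rw [klDual, h_exp, integral_indicator_const c hA, smul_eq_mul, sub_zero]

section ChangeOfMeasure

variable [SigmaFinite P] [P.HaveLebesgueDecomposition Q] {g : X → ℝ}

lemma integrable_rnDeriv_mul_sub_exp (hPQ : P ≪ Q) (hgP : Integrable g P)
    (hgQ : Integrable (fun x ↦ Real.exp (g x) - 1) Q) :
    Integrable (fun x ↦ (P.rnDeriv Q x).toReal * g x - (Real.exp (g x) - 1)) Q :=
  ((integrable_toReal_rnDeriv_mul_iff hPQ).2 hgP).sub hgQ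

lemma klDual_eq_integral_rnDeriv (hPQ : P ≪ Q) (hgP : Integrable g P)
    (hgQ : Integrable (fun x ↦ Real.exp (g x) - 1) Q) :
    klDual P Q g = ∫ x, ((P.rnDeriv Q x).toReal * g x - (Real.exp (g x) - 1)) ∂Q := by
  rw [klDual, integral_sub ((integrable_toReal_rnDeriv_mul_iff hPQ).2 hgP) hgQ,
    integral_toReal_rnDeriv_mul hPQ]

end ChangeOfMeasure

variable [IsFiniteMeasure P] [IsFiniteMeasure Q]

lemma ofReal_klDual_le_klDiv {g : X → ℝ} (hgP : Integrable g P)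
    (hgQ : Integrable (fun x ↦ Real.exp (g x) - 1) Q) :
    ENNReal.ofReal (klDual P Q g) ≤ InformationTheory.klDiv P Q := by
  by_cases h : P ≪ Q ∧ Integrable (llr P Q) P
  · obtain ⟨hPQ, h_llr⟩ := h
    refine ENNReal.ofReal_le_of_le_toReal ?_
    rw [InformationTheory.toReal_klDiv_eq_integral_klFun hPQ,
      klDual_eq_integral_rnDeriv hPQ hgP hgQ]
    exact integral_mono (integrable_rnDeriv_mul_sub_exp hPQ hgP hgQ)
      ((InformationTheory.integrable_klFun_rnDeriv_iff hPQ).2 h_llr)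
      fun x ↦ mul_sub_exp_le_klFun ENNReal.toReal_nonneg _
  · rw [not_ne_iff.1 (mt InformationTheory.klDiv_ne_top_iff.1 h)]
    exact le_top

lemma klDiv_le_liminf_klDual_logClamp (hPQ : P ≪ Q) :
    InformationTheory.klDiv P Q ≤
      liminf (fun n ↦ ENNReal.ofReal (klDual P Q fun x ↦ logClamp n (P.rnDeriv Q x).toReal))
        atTop := by
  set r : X → ℝ := fun x ↦ (P.rnDeriv Q x).toReal
  have hr : Measurable r := (P.measurable_rnDeriv Q).ennreal_toReal
  set φ : ℕ → X → ℝ := fun n x ↦ r x * logClamp n (r x) - (Real.exp (logClamp n (r x)) - 1)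
  have h_log_meas (n : ℕ) : Measurable fun x ↦ logClamp n (r x) := (measurable_logClamp n).comp hr
  have h_log_int (n : ℕ) : Integrable (fun x ↦ logClamp n (r x)) P :=
    .of_bound (h_log_meas n).aestronglyMeasurable n (ae_of_all _ fun x ↦ abs_logClamp_le n _)
  have h_exp_int (n : ℕ) : Integrable (fun x ↦ Real.exp (logClamp n (r x)) - 1) Q :=
    integrable_exp_sub_one_of_bounded (h_log_meas n) fun x ↦ abs_logClamp_le n _
  calc InformationTheory.klDiv P Q
      = ∫⁻ x, ENNReal.ofReal (klFun (r x)) ∂Q :=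
        InformationTheory.klDiv_eq_lintegral_klFun_of_ac hPQ
    _ = ∫⁻ x, liminf (fun n ↦ ENNReal.ofReal (φ n x)) atTop ∂Q :=
        lintegral_congr fun x ↦ ((ENNReal.continuous_ofReal.tendsto _).comp
          (tendsto_mul_logClamp_sub_exp ENNReal.toReal_nonneg)).liminf_eq.symm
    _ ≤ liminf (fun n ↦ ∫⁻ x, ENNReal.ofReal (φ n x) ∂Q) atTop :=
        lintegral_liminf_le fun n ↦ by have := h_log_meas n; fun_prop
    _ = liminf (fun n ↦ ENNReal.ofReal (klDual P Q fun x ↦ logClamp n (r x))) atTop := by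
        congr with n
        rw [klDual_eq_integral_rnDeriv hPQ (h_log_int n) (h_exp_int n),
          ofReal_integral_eq_lintegral_ofReal
            (integrable_rnDeriv_mul_sub_exp hPQ (h_log_int n) (h_exp_int n))
            (ae_of_all _ fun x ↦ mul_logClamp_sub_exp_nonneg n _)]

lemma klDiv_le_of_forall_klDual_le {a : ℝ≥0∞}
    (h : ∀ (g : X → ℝ) (C : ℝ), Measurable g → (∀ x, |g x| ≤ C) →
      ENNReal.ofReal (klDual P Q g) ≤ a) :
    InformationTheory.klDiv P Q ≤ a := by
  by_cases hPQ : P ≪ Q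
  · refine (klDiv_le_liminf_klDual_logClamp hPQ).trans <|
      liminf_le_of_frequently_le' <| .of_forall fun n ↦ h _ n ?_ fun x ↦ abs_logClamp_le n _
    exact (measurable_logClamp n).comp (P.measurable_rnDeriv Q).ennreal_toReal
  · obtain ⟨A, hA, hQA, hPA⟩ : ∃ A, MeasurableSet A ∧ Q A = 0 ∧ P A ≠ 0 := by
      by_contra! hPQ'
      exact hPQ (.mk hPQ')
    have hPA_pos : 0 < P.real A := ENNReal.toReal_pos hPA (measure_ne_top P A)
    have h_le (c : ℕ) : ENNReal.ofReal (P.real A * c) ≤ a := by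
      rw [← klDual_indicator_const_of_measure_eq_zero hA hQA]
      refine h _ c (measurable_const.indicator hA) fun x ↦ ?_
      exact (norm_indicator_le_norm_self (fun _ ↦ (c : ℝ)) x).trans_eq (Real.norm_natCast c)
    have h_tendsto : Tendsto (fun c : ℕ ↦ ENNReal.ofReal (P.real A * c)) atTop (𝓝 ∞) :=
      ENNReal.tendsto_ofReal_atTop.comp (tendsto_natCast_atTop_atTop.const_mul_atTop hPA_pos)
    exact le_top.trans (le_of_tendsto' h_tendsto h_le)

lemma tendsto_klDual_of_bounded {g : ℕ → X → ℝ} {f : X → ℝ} {C : ℝ} (hg : ∀ n, Measurable (g n))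
    (hC : ∀ n x, |g n x| ≤ C) (hP : ∀ᵐ x ∂P, Tendsto (g · x) atTop (𝓝 (f x)))
    (hQ : ∀ᵐ x ∂Q, Tendsto (g · x) atTop (𝓝 (f x))) :
    Tendsto (fun n ↦ klDual P Q (g n)) atTop (𝓝 (klDual P Q f)) := by
  refine Tendsto.sub ?_ ?_
  · exact tendsto_integral_of_dominated_convergence (fun _ ↦ C)
      (fun n ↦ (hg n).aestronglyMeasurable) (integrable_const C) (fun n ↦ ae_of_all _ (hC n)) hP
  · refine tendsto_integral_of_dominated_convergence (fun _ ↦ Real.exp C + 1)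
      (fun n ↦ by have := hg n; fun_prop) (integrable_const _)
      (fun n ↦ ae_of_all _ fun x ↦ abs_exp_sub_one_le (hC n x)) ?_
    filter_upwards [hQ] with x hx
    exact ((Real.continuous_exp.tendsto _).comp hx).sub_const 1

lemma klDiv_eq_coe_klDiv_add_real_univ_sub :
    klDiv P Q = (InformationTheory.klDiv P Q : EReal)
      + ((P.real Set.univ - Q.real Set.univ : ℝ) : EReal) := by
  by_cases h : P ≪ Q ∧ Integrable (llr P Q) P
  · rw [klDiv, if_pos h, InformationTheory.klDiv_of_ac_of_integrable h.1 h.2,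
      EReal.coe_ennreal_ofReal,
      max_eq_left (InformationTheory.integral_llr_add_sub_measure_univ_nonneg h.1 h.2),
      ← EReal.coe_add]
    congr 1
    ring
  · rw [klDiv, if_neg h, not_ne_iff.1 (mt InformationTheory.klDiv_ne_top_iff.1 h),
      EReal.coe_ennreal_top, EReal.top_add_coe]

end Measurable

section Continuous

variable {X : Type*} [TopologicalSpace X] [MeasurableSpace X]

lemma exists_seq_boundedContinuous_tendsto_ae [NormalSpace X] [BorelSpace X] {E : Type*}
    [NormedAddCommGroup E] [NormedSpace ℝ E] {μ : Measure X} [μ.WeaklyRegular] {f : X → E}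
    (hf : Integrable f μ) :
    ∃ g : ℕ → X →ᵇ E, ∀ᵐ x ∂μ, Tendsto (g · x) atTop (𝓝 (f x)) := by
  choose g hg_le hg using fun n : ℕ ↦ (memLp_one_iff_integrable.2 hf)
    |>.exists_boundedContinuous_eLpNorm_sub_le ENNReal.one_ne_top
      (ENNReal.inv_ne_zero.2 (ENNReal.natCast_ne_top n))
  have h_eLpNorm : Tendsto (fun n ↦ eLpNorm (⇑(g n) - f) 1 μ) atTop (𝓝 0) :=
    tendsto_of_tendsto_of_tendsto_of_le_of_le tendsto_const_nhds
      ENNReal.tendsto_inv_nat_nhds_zero (fun _ ↦ zero_le)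
      fun n ↦ (eLpNorm_sub_comm _ _ _ _).trans_le (hg_le n)
  obtain ⟨k, -, h_ae⟩ := (tendstoInMeasure_of_tendsto_eLpNorm one_ne_zero
    (fun n ↦ (hg n).aestronglyMeasurable) hf.aestronglyMeasurable h_eLpNorm).exists_seq_tendsto_ae
  exact ⟨g ∘ k, h_ae⟩

lemma exists_seq_boundedContinuous_abs_le_tendsto_ae [NormalSpace X] [BorelSpace X]
    {μ : Measure X} [μ.WeaklyRegular] {f : X → ℝ} {C : ℝ} (hf : Integrable f μ)
    (hC : ∀ x, |f x| ≤ C) :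
    ∃ g : ℕ → X →ᵇ ℝ, (∀ n x, |g n x| ≤ C) ∧ ∀ᵐ x ∂μ, Tendsto (g · x) atTop (𝓝 (f x)) := by
  obtain ⟨g, hg⟩ := exists_seq_boundedContinuous_tendsto_ae hf
  refine ⟨fun n ↦ .const X (-C) ⊔ (.const X C ⊓ g n), fun n x ↦ abs_le.2 ⟨?_, ?_⟩, ?_⟩
  · exact le_max_left _ _
  · exact max_le (neg_le_self ((abs_nonneg _).trans (hC x))) (min_le_left _ _)
  · filter_upwards [hg] with x hx
    have h_clamp : max (-C) (min C (f x)) = f x := by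
      rw [min_eq_right (le_of_abs_le (hC x)), max_eq_right (neg_le_of_abs_le (hC x))]
    rw [← h_clamp]
    exact tendsto_const_nhds.max (tendsto_const_nhds.min hx)

lemma continuous_klDual [OpensMeasurableSpace X] (g : X →ᵇ ℝ) :
    Continuous fun p : FiniteMeasure X × FiniteMeasure X ↦ klDual p.1 p.2 g := by
  let expSubOne : X →ᵇ ℝ := .ofNormedAddCommGroup (fun x ↦ Real.exp (g x) - 1) (by fun_prop)
    (Real.exp ‖g‖ + 1) fun x ↦ abs_exp_sub_one_le (g.norm_coe_le_norm x)
  exact ((FiniteMeasure.continuous_integral_boundedContinuousFunction g).comp continuous_fst).sub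
    ((FiniteMeasure.continuous_integral_boundedContinuousFunction expSubOne).comp continuous_snd)

lemma klDiv_eq_iSup_klDual [NormalSpace X] [BorelSpace X] {P Q : Measure X} [IsFiniteMeasure P]
    [IsFiniteMeasure Q] [(P + Q).WeaklyRegular] :
    InformationTheory.klDiv P Q = ⨆ g : X →ᵇ ℝ, ENNReal.ofReal (klDual P Q g) := by
  refine le_antisymm (klDiv_le_of_forall_klDual_le fun f C hf hC ↦ ?_) (iSup_le fun g ↦ ?_)
  · obtain ⟨g, hgC, hg⟩ := exists_seq_boundedContinuous_abs_le_tendsto_ae (μ := P + Q)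
      (.of_bound hf.aestronglyMeasurable C (ae_of_all _ hC)) hC
    obtain ⟨hgP, hgQ⟩ := ae_add_measure_iff.1 hg
    have h_tendsto := tendsto_klDual_of_bounded (fun n ↦ (g n).continuous.measurable) hgC hgP hgQ
    exact le_of_tendsto' (ENNReal.tendsto_ofReal h_tendsto)
      fun n ↦ le_iSup (fun g : X →ᵇ ℝ ↦ ENNReal.ofReal (klDual P Q g)) (g n)
  · exact ofReal_klDual_le_klDiv (g.integrable P)
      (integrable_exp_sub_one_of_bounded g.continuous.measurable g.norm_coe_le_norm)

variable [TopologicalSpace.PseudoMetrizableSpace X] [BorelSpace X]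

lemma lowerSemicontinuous_klDiv :
    LowerSemicontinuous fun p : FiniteMeasure X × FiniteMeasure X ↦
      InformationTheory.klDiv (p.1 : Measure X) p.2 := by
  simp_rw [klDiv_eq_iSup_klDual]
  exact lowerSemicontinuous_iSup fun g ↦
    (ENNReal.continuous_ofReal.comp (continuous_klDual g)).lowerSemicontinuous

theorem klDiv_jointly_lower_semicontinuous_general :
    LowerSemicontinuous fun p : FiniteMeasure X × FiniteMeasure X ↦
      klDiv (p.1 : Measure X) p.2 := by
  have h_mass : Continuous fun p : FiniteMeasure X × FiniteMeasure X ↦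
      (((p.1 : Measure X).real Set.univ - (p.2 : Measure X).real Set.univ : ℝ) : EReal) :=
    continuous_coe_real_ereal.comp <|
      (NNReal.continuous_coe.comp (FiniteMeasure.continuous_mass.comp continuous_fst)).sub
        (NNReal.continuous_coe.comp (FiniteMeasure.continuous_mass.comp continuous_snd))
  simp_rw [klDiv_eq_coe_klDiv_add_real_univ_sub]
  exact (continuous_coe_ennreal_ereal.comp_lowerSemicontinuous lowerSemicontinuous_klDiv
    EReal.coe_ennreal_strictMono.monotone).add' h_mass.lowerSemicontinuous fun _ ↦
      EReal.continuousAt_add (.inr (EReal.coe_ne_bot _)) (.inr (EReal.coe_ne_top _))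

end Continuous

/-- Joint lower semicontinuity of the Kullback–Leibler divergence with respect to weak
convergence of probability measures on a Polish space. -/
theorem klDiv_jointly_lower_semicontinuous
    {X : Type*} [MetricSpace X] [CompleteSpace X] [TopologicalSpace.SeparableSpace X]
    [MeasurableSpace X] [BorelSpace X]
    (P Q : ℕ → ProbabilityMeasure X) (Plim Qlim : ProbabilityMeasure X)
    (hP : Tendsto P atTop (𝓝 Plim)) (hQ : Tendsto Q atTop (𝓝 Qlim)) :
    klDiv (Plim : Measure X) (Qlim : Measure X)
      ≤ liminf (fun n => klDiv (P n : Measure X) (Q n : Measure X)) atTop := by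
  have h_cont := ProbabilityMeasure.toFiniteMeasure_continuous (Ω := X)
  exact ((klDiv_jointly_lower_semicontinuous_general.comp (h_cont.prodMap h_cont)).le_liminf
    (Plim, Qlim)).trans (hP.prodMk_nhds hQ).liminf_le_liminf_comp
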